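/- arXiv:2202.05634 — 3 statements merged into one kernel-verified Lean document; each statement's English description precedes it below -/
import Mathlib

section
/- Let γ > 1, τ > 0, T > 0, R > 0 and ρ̄ > 0, and set σ := √(γρ̄^{γ−1} + 1/(τρ̄²)) (the value √(p′(ρ̄) + 1/(τρ̄²)) for p(ρ) = ρ^γ). Suppose (ρ, u, S) ∈ C¹([0,T) × ℝ; ℝ³) solves the relaxation system ρ_t + (ρu)_x = 0, ρu_t + ρuu_x + (ρ^γ)_x = S_x, τρ(S_t + uS_x) − u_x = −S with ρ > 0, such that (ρ, u, S) and its first-order partial derivatives are bounded on [0,t] × ℝ for every t ∈ [0,T), and such that the initial data satisfy (ρ(0,x) − ρ̄, u(0,x), S(0,x)) = (0,0,0) for all |x| ≥ R. Then for every t ∈ [0,T) and every x with |x| ≥ R + σt one has (ρ(t,x), u(t,x), S(t,x)) = (ρ̄, 0, 0). -/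
/-- Time partial derivative, taken within the time interval `[0, T)`. -/
noncomputable def pderivT (T : ℝ) (f : ℝ × ℝ → ℝ) (p : ℝ × ℝ) : ℝ :=
  derivWithin (fun s => f (s, p.2)) (Set.Ico 0 T) p.1

/-- Space partial derivative. -/
noncomputable def pderivX (f : ℝ × ℝ → ℝ) (p : ℝ × ℝ) : ℝ :=
  deriv (fun y => f (p.1, y)) p.2

open Set Filter Topology

/-- Chain rule along straight lines. -/
lemma fsp_chain {T : ℝ} {f : ℝ × ℝ → ℝ} (hf : ContDiffOn ℝ 1 f (Ico 0 T ×ˢ (univ : Set ℝ)))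
    (l x t s : ℝ) (hs : s ∈ Ico 0 T) :
    HasDerivWithinAt (fun r => f (r, x - l * (t - r)))
      (pderivT T f (s, x - l * (t - s)) + l * pderivX f (s, x - l * (t - s))) (Ico 0 T) s ∧
    HasDerivAt (fun y => f (s, y)) (pderivX f (s, x - l * (t - s))) (x - l * (t - s)) := by
  set y := x - l * (t - s) with hy
  have hp : (s, y) ∈ Ico 0 T ×ˢ (univ : Set ℝ) := ⟨hs, mem_univ _⟩
  have hd := ((hf.differentiableOn (by norm_num)) (s, y) hp).hasFDerivWithinAt
  set L := fderivWithin ℝ f (Ico 0 T ×ˢ (univ : Set ℝ)) (s, y)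
  have h1 : HasDerivWithinAt (fun r => f (r, y)) (L (1, 0)) (Ico 0 T) s :=
    HasFDerivWithinAt.comp_hasDerivWithinAt (f := fun r : ℝ => (r, y)) s hd
      ((hasDerivWithinAt_id s _).prodMk (hasDerivWithinAt_const s _ y))
      (fun r hr => ⟨hr, mem_univ _⟩)
  have h2 : HasDerivAt (fun z => f (s, z)) (L (0, 1)) y := by
    rw [← hasDerivWithinAt_univ]
    exact HasFDerivWithinAt.comp_hasDerivWithinAt (f := fun z : ℝ => (s, z)) y hd
      ((hasDerivWithinAt_const y _ s).prodMk (hasDerivWithinAt_id y _))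
      (fun r hr => ⟨hs, mem_univ _⟩)
  have hlin : HasDerivWithinAt (fun r : ℝ => x - l * (t - r)) l (Ico 0 T) s := by
    have := (((hasDerivAt_id s).const_sub t).const_mul l).const_sub x
    simpa using this.hasDerivWithinAt
  have h3 : HasDerivWithinAt (fun r => f (r, x - l * (t - r))) (L (1, l)) (Ico 0 T) s := by
    refine HasFDerivWithinAt.comp_hasDerivWithinAt (f := fun r : ℝ => (r, x - l * (t - r)))
      s ?_ ((hasDerivWithinAt_id s _).prodMk hlin) (t := Ico 0 T ×ˢ (univ : Set ℝ))
      (fun r hr => ⟨hr, mem_univ _⟩)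
    exact hd
  have e1 : pderivT T f (s, y) = L (1, 0) :=
    h1.derivWithin (uniqueDiffOn_Ico 0 T s hs)
  have e2 : pderivX f (s, y) = L (0, 1) := h2.deriv
  have e3 : L (1, l) = L (1, 0) + l * L (0, 1) := by
    have : ((1 : ℝ), l) = (1, 0) + l • ((0 : ℝ), (1 : ℝ)) := by ext <;> simp
    rw [this, map_add, map_smul, smul_eq_mul]
  rw [e1, e2, ← e3]
  exact ⟨h3, h2⟩

/-- Integrating a polynomial bound on the derivative. -/
lemma fsp_int {T t B : ℝ} (n : ℕ) {φ φ' : ℝ → ℝ} (ht : t ∈ Ico 0 T)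
    (hd : ∀ s ∈ Ico 0 T, HasDerivWithinAt φ (φ' s) (Ico 0 T) s)
    (hb : ∀ s ∈ Icc 0 t, |φ' s| ≤ B * s ^ n) (h0 : φ 0 = 0) :
    |φ t| ≤ B * t ^ (n + 1) / (n + 1) := by
  have hsub : Icc 0 t ⊆ Ico 0 T := fun s hs => ⟨hs.1, hs.2.trans_lt ht.2⟩
  have hn : (n : ℝ) + 1 ≠ 0 := by positivity
  have key := image_norm_le_of_norm_deriv_right_le_deriv_boundary (f := φ) (f' := φ') (a := 0)
    (b := t) (B := fun s => B * s ^ (n + 1) / (n + 1)) (B' := fun s => B * s ^ n)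
    (fun s hs => ((hd s (hsub hs)).continuousWithinAt).mono hsub)
    (fun s hs => by
      have hs' : s ∈ Ico 0 T := hsub ⟨hs.1, hs.2.le⟩
      exact (hd s hs').mono_of_mem_nhdsWithin
        (mem_of_superset (Ico_mem_nhdsGE hs'.2) (Ico_subset_Ico_left hs'.1)))
    (by simp [h0])
    (fun s => by
      have := ((hasDerivAt_pow (n + 1) s).const_mul B).div_const ((n : ℝ) + 1)
      have e : B * (((n + 1 : ℕ) : ℝ) * s ^ (n + 1 - 1)) / ((n : ℝ) + 1) = B * s ^ n := by
        rw [div_eq_iff hn, Nat.add_sub_cancel]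
        push_cast
        ring
      rw [e] at this
      exact this)
    (fun s hs => hb s ⟨hs.1, hs.2.le⟩)
  exact key ⟨ht.1, le_rfl⟩

/-- A power is Lipschitz at a fixed positive base point, on bounded sets. -/
lemma fsp_lip {a b C : ℝ} (ha : 0 < a) (hb : 0 < b) :
    ∃ L : ℝ, 0 ≤ L ∧ ∀ y, 0 < y → y ≤ C → |y ^ a - b ^ a| ≤ L * |y - b| := by
  have hd : (fun y : ℝ => y ^ a - b ^ a) =O[𝓝 b] fun y => y - b :=
    (Real.hasDerivAt_rpow_const (Or.inl hb.ne')).isBigO_sub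
  obtain ⟨c, hc, hcb⟩ := hd.exists_pos
  obtain ⟨δ, hδ, hball⟩ := Metric.eventually_nhds_iff.1 hcb.bound
  have hba : 0 < b ^ a := Real.rpow_pos_of_pos hb a
  refine ⟨c + (|C| ^ a + b ^ a) / δ, by positivity, fun y hy hyC => ?_⟩
  by_cases h : dist y b < δ
  · have h1 := hball h
    simp only [Real.norm_eq_abs] at h1
    refine h1.trans ?_
    have : 0 ≤ (|C| ^ a + b ^ a) / δ := by positivity
    gcongr
    linarith
  · rw [Real.dist_eq] at h
    push Not at h
    have h1 : y ^ a ≤ |C| ^ a := Real.rpow_le_rpow hy.le (hyC.trans (le_abs_self C)) ha.le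
    have h2 : 0 < y ^ a := Real.rpow_pos_of_pos hy a
    have h3 : |y ^ a - b ^ a| ≤ |C| ^ a + b ^ a := by
      rw [abs_le]; constructor <;> linarith
    have h4 : |C| ^ a + b ^ a ≤ (|C| ^ a + b ^ a) / δ * |y - b| := by
      calc |C| ^ a + b ^ a = (|C| ^ a + b ^ a) / δ * δ := by field_simp
        _ ≤ _ := by gcongr
    have h5 : 0 ≤ c * |y - b| := by positivity
    rw [add_mul]
    linarith

lemma fsp_mul_le {x y C D : ℝ} (hx : |x| ≤ D) (hy : |y| ≤ C) : |x * y| ≤ C * D := by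
  rw [abs_mul, mul_comm]
  exact mul_le_mul hy hx (abs_nonneg _) ((abs_nonneg _).trans hy)

/-- Residuals of the linearised system are controlled by the deviation. -/
lemma fsp_resid {γ τ ρb C L p v z pt vt zt px vx zx pg : ℝ} (hγ : 1 < γ) (hτ : 0 < τ)
    (hL : 0 ≤ L) (hpg : |pg - ρb ^ (γ - 1)| ≤ L * |p - ρb|)
    (hp : |p| ≤ C) (hvt : |vt| ≤ C) (hzt : |zt| ≤ C)
    (hpx : |px| ≤ C) (hvx : |vx| ≤ C) (hzx : |zx| ≤ C)
    (e1 : pt + (px * v + p * vx) = 0)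
    (e2 : p * vt + p * v * vx + γ * pg * px = zx)
    (e3 : τ * p * (zt + v * zx) - vx = - z) :
    let G := C + C * C + γ * (C * L) + 1 + τ * C + τ * (C * C)
    let E := |p - ρb| + |v| + |z|
    |pt + ρb * vx| ≤ G * E ∧ |ρb * vt + γ * ρb ^ (γ - 1) * px - zx| ≤ G * E ∧
      |τ * ρb * zt - vx| ≤ G * E := by
  intro G E
  have hC : 0 ≤ C := (abs_nonneg _).trans hp
  have a0 := abs_nonneg (p - ρb)
  have a1 := abs_nonneg v
  have a2 := abs_nonneg z
  have c1 : |(p - ρb) * vx| ≤ C * |p - ρb| := fsp_mul_le le_rfl hvx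
  have c2 : |v * px| ≤ C * |v| := fsp_mul_le le_rfl hpx
  have c3 : |(p - ρb) * vt| ≤ C * |p - ρb| := fsp_mul_le le_rfl hvt
  have hpv : |v * p| ≤ C * |v| := fsp_mul_le le_rfl hp
  have c4 : |v * p * vx| ≤ C * (C * |v|) := fsp_mul_le hpv hvx
  have c5 : |(pg - ρb ^ (γ - 1)) * px| ≤ C * (L * |p - ρb|) := fsp_mul_le hpg hpx
  have c6 : |(p - ρb) * zt| ≤ C * |p - ρb| := fsp_mul_le le_rfl hzt
  have c7 : |v * p * zx| ≤ C * (C * |v|) := fsp_mul_le hpv hzx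
  have hγ0 : 0 < γ := by linarith
  have n1 : 0 ≤ C * C := by positivity
  have n2 : 0 ≤ γ * (C * L) := by positivity
  have n3 : 0 ≤ τ * C := by positivity
  have n4 : 0 ≤ τ * (C * C) := by positivity
  have hE0 : 0 ≤ E := by positivity
  have hr : |p - ρb| ≤ E := by simp only [E]; linarith
  have hru : |p - ρb| + |v| ≤ E := by simp only [E]; linarith
  have hv : |v| ≤ E := by simp only [E]; linarith
  have hz : |z| ≤ E := by simp only [E]; linarith
  have m1 := mul_le_mul_of_nonneg_left hru hC
  have m2 := mul_le_mul_of_nonneg_left hv n1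
  have m3 := mul_le_mul_of_nonneg_left hr n2
  have m4 := mul_le_mul_of_nonneg_left hr n3
  have m5 := mul_le_mul_of_nonneg_left hv n4
  have m6 := mul_le_mul_of_nonneg_left hr hC
  have z1 := mul_nonneg hC hE0
  have z2 := mul_nonneg n1 hE0
  have z3 := mul_nonneg n2 hE0
  have z4 := mul_nonneg n3 hE0
  have z5 := mul_nonneg n4 hE0
  have hGE : G * E = C * E + C * C * E + γ * (C * L) * E + E + τ * C * E + τ * (C * C) * E := by
    simp only [G]; ring
  refine ⟨?_, ?_, ?_⟩
  · have : pt + ρb * vx = -((p - ρb) * vx) - v * px := by linear_combination e1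
    rw [this]
    refine (abs_sub _ _).trans ?_
    rw [abs_neg]
    linarith
  · have : ρb * vt + γ * ρb ^ (γ - 1) * px - zx
        = -((p - ρb) * vt) - v * p * vx - γ * ((pg - ρb ^ (γ - 1)) * px) := by
      linear_combination e2
    rw [this]
    refine (abs_sub _ _).trans ((add_le_add_left (abs_sub _ _) _).trans ?_)
    rw [abs_neg, abs_mul γ, abs_of_pos hγ0]
    have := mul_le_mul_of_nonneg_left c5 hγ0.le
    linarith
  · have : τ * ρb * zt - vx = -z - τ * ((p - ρb) * zt) - τ * (v * p * zx) := by
      linear_combination e3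
    rw [this]
    refine (abs_sub _ _).trans ((add_le_add_left (abs_sub _ _) _).trans ?_)
    rw [abs_neg, abs_mul τ, abs_mul τ, abs_of_pos hτ]
    have i1 := mul_le_mul_of_nonneg_left c6 hτ.le
    have i2 := mul_le_mul_of_nonneg_left c7 hτ.le
    linarith

/-- Recovering the deviation from the Riemann invariants. -/
lemma fsp_recover {a m d r v z W : ℝ} (ha : 0 < a) (hm : 0 < m) (hd : 0 < d)
    (h0 : |r + m * z| ≤ W) (h1 : |a * r - z + d * v| ≤ W) (h2 : |a * r - z - d * v| ≤ W) :
    |r| + |v| + |z| ≤ ((1 + m) + 1 / d + (a * (1 + m) + 1)) * W := by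
  have hW : 0 ≤ W := (abs_nonneg _).trans h0
  rw [abs_le] at h0 h1 h2
  have hv : |v| ≤ 1 / d * W := by
    have e : |v| * d = |v * d| := by rw [abs_mul, abs_of_pos hd]
    rw [one_div, inv_mul_eq_div, le_div_iff₀ hd, e, abs_le]
    constructor <;> nlinarith
  have hq : |a * r - z| ≤ W := by rw [abs_le]; constructor <;> linarith
  have hq' := abs_le.1 hq
  have hr' : |r| * (1 + m * a) ≤ (1 + m) * W := by
    have : 0 < 1 + m * a := by positivity
    have e : |r| * (1 + m * a) = |r * (1 + m * a)| := by rw [abs_mul, abs_of_pos this]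
    rw [e, abs_le]
    constructor <;> nlinarith
  have hr : |r| ≤ (1 + m) * W := by
    have : 0 ≤ |r| * (m * a) := by positivity
    linarith
  have hz : |z| ≤ (a * (1 + m) + 1) * W := by
    have : z = a * r - (a * r - z) := by ring
    rw [this]
    refine (abs_sub _ _).trans ?_
    rw [abs_mul, abs_of_pos ha]
    have := mul_le_mul_of_nonneg_left hr ha.le
    linarith
  linarith

/-- Finite speed of propagation for the relaxation system: a `C¹` solution on
`[0,T) × ℝ`, bounded together with its first derivatives on every slab `[0,t] × ℝ`,
whose initial data is the constant state `(ρ̄, 0, 0)` for `|x| ≥ R`, equals the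
constant state for `|x| ≥ R + σ t`, where `σ = √(p′(ρ̄) + 1/(τρ̄²))`. -/
theorem finite_speed_of_propagation
    (γ τ T R ρb : ℝ) (hγ : 1 < γ) (hτ : 0 < τ) (hT : 0 < T) (hR : 0 < R) (hρb : 0 < ρb)
    (σ : ℝ) (hσ : σ = Real.sqrt (γ * ρb ^ (γ - 1) + 1 / (τ * ρb ^ 2)))
    (ρ u S : ℝ × ℝ → ℝ)
    (hρ : ContDiffOn ℝ 1 ρ (Set.Ico 0 T ×ˢ (Set.univ : Set ℝ)))
    (hu : ContDiffOn ℝ 1 u (Set.Ico 0 T ×ˢ (Set.univ : Set ℝ)))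
    (hS : ContDiffOn ℝ 1 S (Set.Ico 0 T ×ˢ (Set.univ : Set ℝ)))
    (hpos : ∀ p ∈ Set.Ico 0 T ×ˢ (Set.univ : Set ℝ), 0 < ρ p)
    (hmass : ∀ p ∈ Set.Ico 0 T ×ˢ (Set.univ : Set ℝ),
      pderivT T ρ p + pderivX (fun q => ρ q * u q) p = 0)
    (hmom : ∀ p ∈ Set.Ico 0 T ×ˢ (Set.univ : Set ℝ),
      ρ p * pderivT T u p + ρ p * u p * pderivX u p + pderivX (fun q => ρ q ^ γ) p
        = pderivX S p)
    (hrelax : ∀ p ∈ Set.Ico 0 T ×ˢ (Set.univ : Set ℝ),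
      τ * ρ p * (pderivT T S p + u p * pderivX S p) - pderivX u p = - S p)
    (hbdd : ∀ t ∈ Set.Ico (0 : ℝ) T, ∃ C : ℝ, ∀ s ∈ Set.Icc (0 : ℝ) t, ∀ x : ℝ,
      |ρ (s, x)| ≤ C ∧ |u (s, x)| ≤ C ∧ |S (s, x)| ≤ C ∧
      |pderivT T ρ (s, x)| ≤ C ∧ |pderivT T u (s, x)| ≤ C ∧ |pderivT T S (s, x)| ≤ C ∧
      |pderivX ρ (s, x)| ≤ C ∧ |pderivX u (s, x)| ≤ C ∧ |pderivX S (s, x)| ≤ C)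
    (hinit : ∀ x : ℝ, R ≤ |x| → ρ (0, x) = ρb ∧ u (0, x) = 0 ∧ S (0, x) = 0) :
    ∀ t ∈ Set.Ico (0 : ℝ) T, ∀ x : ℝ, R + σ * t ≤ |x| →
      ρ (t, x) = ρb ∧ u (t, x) = 0 ∧ S (t, x) = 0 := by
  intro t₀ ht₀
  obtain ⟨C, hC⟩ := hbdd t₀ ht₀
  have hC0 : 0 ≤ C := (abs_nonneg _).trans (hC 0 ⟨le_rfl, ht₀.1⟩ 0).1
  obtain ⟨L, hL, hLip⟩ := fsp_lip (a := γ - 1) (b := ρb) (C := C) (by linarith) hρb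
  have hγ0 : 0 < γ := by linarith
  obtain ⟨a, ha_def⟩ : ∃ a, a = γ * ρb ^ (γ - 1) := ⟨_, rfl⟩
  obtain ⟨k, hk_def⟩ : ∃ k, k = 1 / (τ * ρb) := ⟨_, rfl⟩
  have ha : 0 < a := by rw [ha_def]; positivity
  have hk : 0 < k := by rw [hk_def]; positivity
  have hk1 : k * (τ * ρb) = 1 := by rw [hk_def]; field_simp
  have hin : 0 < a + 1 / (τ * ρb ^ 2) := by positivity
  rw [← ha_def] at hσ
  have hσ0 : 0 < σ := by rw [hσ]; exact Real.sqrt_pos.2 hin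
  have hσ2 : ρb * σ ^ 2 = a * ρb + k := by
    rw [hσ, Real.sq_sqrt hin.le, hk_def]; field_simp
  set G := C + C * C + γ * (C * L) + 1 + τ * C + τ * (C * C) with hG
  have hG0 : 0 ≤ G := by positivity
  set E : ℝ → ℝ → ℝ := fun s x => |ρ (s, x) - ρb| + |u (s, x)| + |S (s, x)| with hE
  -- residual bounds
  have hres : ∀ s ∈ Icc 0 t₀, ∀ x,
      |pderivT T ρ (s, x) + ρb * pderivX u (s, x)| ≤ G * E s x ∧
      |ρb * pderivT T u (s, x) + a * pderivX ρ (s, x) - pderivX S (s, x)| ≤ G * E s x ∧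
      |τ * ρb * pderivT T S (s, x) - pderivX u (s, x)| ≤ G * E s x := by
    intro s hs x
    have hs' : s ∈ Ico 0 T := ⟨hs.1, hs.2.trans_lt ht₀.2⟩
    have hp : (s, x) ∈ Ico 0 T ×ˢ (univ : Set ℝ) := ⟨hs', mem_univ _⟩
    obtain ⟨b1, b2, b3, b4, b5, b6, b7, b8, b9⟩ := hC s hs x
    have dρ := (fsp_chain hρ 0 x 0 s hs').2
    have du := (fsp_chain hu 0 x 0 s hs').2
    simp only [zero_mul, sub_zero] at dρ du
    have e1 := hmass _ hp
    have e2 := hmom _ hp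
    have e3 := hrelax _ hp
    have f1 : pderivX (fun q => ρ q * u q) (s, x)
        = pderivX ρ (s, x) * u (s, x) + ρ (s, x) * pderivX u (s, x) := (dρ.mul du).deriv
    have f2 : pderivX (fun q => ρ q ^ γ) (s, x)
        = γ * ρ (s, x) ^ (γ - 1) * pderivX ρ (s, x) := by
      have := (dρ.rpow_const (p := γ) (Or.inl (hpos _ hp).ne')).deriv
      refine Eq.trans this ?_
      ring
    rw [f1] at e1
    rw [f2] at e2
    have := fsp_resid hγ hτ hL
      (hLip _ (hpos _ hp) ((le_abs_self _).trans b1)) b1 b5 b6 b7 b8 b9 e1 e2 e3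
    rw [← ha_def] at this
    exact this
  set Q := (1 + ρb) + (a + k + σ) with hQ
  set N := (1 + τ * ρb ^ 2) + 1 / (ρb * σ) + (a * (1 + τ * ρb ^ 2) + 1) with hN
  have hN0 : 0 < N := by positivity
  have hQ0 : 0 < Q := by positivity
  set M := N * (Q * G) with hM
  set K := C + ρb + C + C with hK
  have hK0 : 0 ≤ K := by positivity
  have hM0 : 0 ≤ M := by positivity
  have claim : ∀ n : ℕ, ∀ s ∈ Icc 0 t₀, ∀ x, R + σ * s ≤ |x| →
      E s x ≤ (K * M ^ n / n.factorial) * s ^ n := by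
    intro n
    induction n with
    | zero =>
      intro s hs x _
      obtain ⟨b1, b2, b3, -⟩ := hC s hs x
      have : |ρ (s, x) - ρb| ≤ |ρ (s, x)| + |ρb| := abs_sub _ _
      rw [abs_of_pos hρb] at this
      simp only [pow_zero, Nat.factorial_zero, Nat.cast_one, div_one, mul_one, hE]
      linarith
    | succ n ih =>
      intro t ht x hx
      set κ := K * M ^ n / n.factorial with hκ
      have ht' : t ∈ Ico 0 T := ⟨ht.1, ht.2.trans_lt ht₀.2⟩
      have hreg : ∀ l, |l| ≤ σ → ∀ s ∈ Icc 0 t, R + σ * s ≤ |x - l * (t - s)| := by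
        intro l hl s hs
        have h1 : |l * (t - s)| ≤ σ * (t - s) := by
          rw [abs_mul, abs_of_nonneg (sub_nonneg.2 hs.2)]
          exact mul_le_mul_of_nonneg_right hl (sub_nonneg.2 hs.2)
        have h2 := abs_sub_abs_le_abs_sub x (l * (t - s))
        linarith
      -- one characteristic field
      have field : ∀ l α β δ : ℝ, |l| ≤ σ →
          (∀ s ∈ Icc 0 t₀, ∀ y,
            |α * (pderivT T ρ (s, y) + l * pderivX ρ (s, y))
              + β * (pderivT T u (s, y) + l * pderivX u (s, y))
              + δ * (pderivT T S (s, y) + l * pderivX S (s, y))| ≤ Q * G * E s y) →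
          |α * (ρ (t, x) - ρb) + β * u (t, x) + δ * S (t, x)|
            ≤ Q * G * κ * t ^ (n + 1) / (n + 1) := by
        intro l α β δ hl hder
        have := fsp_int (T := T) (t := t) (B := Q * G * κ) n
          (φ := fun s => α * (ρ (s, x - l * (t - s)) - ρb) + β * u (s, x - l * (t - s))
            + δ * S (s, x - l * (t - s))) ht'
          (fun s hs => ((((fsp_chain hρ l x t s hs).1.sub_const ρb).const_mul α).add
            ((fsp_chain hu l x t s hs).1.const_mul β)).add
            ((fsp_chain hS l x t s hs).1.const_mul δ))
          (fun s hs => by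
            have hs' : s ∈ Icc 0 t₀ := ⟨hs.1, hs.2.trans ht.2⟩
            refine (hder s hs' _).trans ?_
            rw [mul_assoc (Q * G)]
            exact mul_le_mul_of_nonneg_left (ih s hs' _ (hreg l hl s hs)) (by positivity))
          (by
            have h := hreg l hl 0 ⟨le_rfl, ht.1⟩
            rw [mul_zero, add_zero] at h
            obtain ⟨i1, i2, i3⟩ := hinit _ h
            simp only [i1, i2, i3]
            ring)
        simpa using this
      have hGE : ∀ s y, 0 ≤ G * E s y := fun s y => by positivity
      have w0 := field 0 1 0 (τ * ρb ^ 2) (by simpa using hσ0.le) (fun s hs y => by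
        obtain ⟨g1, g2, g3⟩ := hres s hs y
        have e : 1 * (pderivT T ρ (s, y) + 0 * pderivX ρ (s, y))
              + 0 * (pderivT T u (s, y) + 0 * pderivX u (s, y))
              + τ * ρb ^ 2 * (pderivT T S (s, y) + 0 * pderivX S (s, y))
            = (pderivT T ρ (s, y) + ρb * pderivX u (s, y))
              + ρb * (τ * ρb * pderivT T S (s, y) - pderivX u (s, y)) := by ring
        rw [e]
        refine (abs_add_le _ _).trans ?_
        rw [abs_mul, abs_of_pos hρb]
        have h1 := mul_le_mul_of_nonneg_left g3 hρb.le
        have h2 : 0 ≤ (a + k + σ) * (G * E s y) := mul_nonneg (by positivity) (hGE s y)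
        have h3 : Q * G * E s y = G * E s y + ρb * (G * E s y) + (a + k + σ) * (G * E s y) := by
          rw [hQ]; ring
        linarith)
      have wpm : ∀ ε : ℝ, ε ^ 2 = 1 → |ε| = 1 →
          |a * (ρ (t, x) - ρb) + ε * (ρb * σ) * u (t, x) + (-1) * S (t, x)|
            ≤ Q * G * κ * t ^ (n + 1) / (n + 1) := by
        intro ε hε hε1
        refine field (ε * σ) a (ε * (ρb * σ)) (-1) ?_ (fun s hs y => ?_)
        · rw [abs_mul, hε1, one_mul, abs_of_pos hσ0]
        · obtain ⟨g1, g2, g3⟩ := hres s hs y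
          have e : a * (pderivT T ρ (s, y) + ε * σ * pderivX ρ (s, y))
                + ε * (ρb * σ) * (pderivT T u (s, y) + ε * σ * pderivX u (s, y))
                + (-1) * (pderivT T S (s, y) + ε * σ * pderivX S (s, y))
              = a * (pderivT T ρ (s, y) + ρb * pderivX u (s, y))
                + ε * σ * (ρb * pderivT T u (s, y) + a * pderivX ρ (s, y) - pderivX S (s, y))
                - k * (τ * ρb * pderivT T S (s, y) - pderivX u (s, y)) := by
            linear_combination (ρb * σ ^ 2 * pderivX u (s, y)) * hε
              + pderivX u (s, y) * hσ2 + pderivT T S (s, y) * hk1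
          rw [e]
          refine (abs_sub _ _).trans ((add_le_add_left (abs_add_le _ _) _).trans ?_)
          rw [abs_mul a, abs_mul (ε * σ), abs_mul k, abs_mul ε, hε1, abs_of_pos ha,
            abs_of_pos hk, abs_of_pos hσ0, one_mul]
          have h1 := mul_le_mul_of_nonneg_left g1 ha.le
          have h2 := mul_le_mul_of_nonneg_left g2 hσ0.le
          have h3 := mul_le_mul_of_nonneg_left g3 hk.le
          have h4 : 0 ≤ (1 + ρb) * (G * E s y) := mul_nonneg (by positivity) (hGE s y)
          have h5 : Q * G * E s y = a * (G * E s y) + σ * (G * E s y) + k * (G * E s y)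
              + (1 + ρb) * (G * E s y) := by rw [hQ]; ring
          linarith
      have w1 := wpm 1 (by norm_num) (by norm_num)
      have w2 := wpm (-1) (by norm_num) (by norm_num)
      have hfin := fsp_recover (a := a) (m := τ * ρb ^ 2) (d := ρb * σ)
        (r := ρ (t, x) - ρb) (v := u (t, x)) (z := S (t, x))
        (W := Q * G * κ * t ^ (n + 1) / (n + 1)) ha (by positivity) (by positivity)
        (by convert w0 using 2; ring) (by convert w1 using 2; ring) (by convert w2 using 2; ring)
      refine hfin.trans (le_of_eq ?_)
      rw [← hN, hκ, Nat.factorial_succ]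
      have : (n.factorial : ℝ) ≠ 0 := by positivity
      push_cast
      rw [pow_succ M n]
      clear_value M N
      subst hM
      field_simp
  intro x hx
  have hlim : Tendsto (fun n : ℕ => (K * M ^ n / n.factorial) * t₀ ^ n) atTop (𝓝 0) := by
    have := (FloorSemiring.tendsto_pow_div_factorial_atTop (M * t₀)).const_mul K
    rw [mul_zero] at this
    refine this.congr (fun n => ?_)
    rw [mul_pow]; ring
  have hE0 : E t₀ x ≤ 0 := ge_of_tendsto' hlim
    (fun n => claim n t₀ ⟨ht₀.1, le_rfl⟩ x hx)
  have a0 := abs_nonneg (ρ (t₀, x) - ρb)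
  have a1 := abs_nonneg (u (t₀, x))
  have a2 := abs_nonneg (S (t₀, x))
  simp only [hE] at hE0
  refine ⟨?_, ?_, ?_⟩
  · exact sub_eq_zero.1 (abs_eq_zero.1 (by linarith))
  · exact abs_eq_zero.1 (by linarith)
  · exact abs_eq_zero.1 (by linarith)
end

section
/- Let γ > 1, τ > 0, T > 0, ρ̄ = 1, M > 0 and σ̃ > 0. Suppose (ρ, u, S) ∈ C¹([0,T) × ℝ; ℝ³) solves the relaxation system ρ_t + (ρu)_x = 0, ρu_t + ρuu_x + (ρ^γ)_x = S_x, τρ(S_t + uS_x) − u_x = −S with ρ > 0, that for every t ∈ [0,T) one has (ρ(t,x), u(t,x), S(t,x)) = (1, 0, 0) whenever |x| ≥ M + σ̃t, and that ∫_ℝ (ρ(t,x) − 1) dx ≥ 0 for all t ∈ [0,T). Then the weighted momentum F(t) := ∫_ℝ x ρ(t,x) u(t,x) dx satisfies, for all t ∈ [0,T): F′(t) ≥ ∫_ℝ ρ(t,x)u(t,x)² dx − (1/2)∫_ℝ S(t,x)² dx − (M + σ̃t). -/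
open MeasureTheory

lemma wm_uniqueDiff {T : ℝ} (_hT : 0 < T) :
    UniqueDiffOn ℝ (Set.Ico 0 T ×ˢ (Set.univ : Set ℝ)) :=
  (uniqueDiffOn_Ico 0 T).prod uniqueDiffOn_univ

lemma wm_hasT {T : ℝ} {f : ℝ × ℝ → ℝ}
    (hf : ContDiffOn ℝ 1 f (Set.Ico 0 T ×ˢ (Set.univ : Set ℝ)))
    {p : ℝ × ℝ} (hp : p ∈ Set.Ico 0 T ×ˢ (Set.univ : Set ℝ)) :
    HasDerivWithinAt (fun s => f (s, p.2))
      (fderivWithin ℝ f (Set.Ico 0 T ×ˢ (Set.univ : Set ℝ)) p (1, 0)) (Set.Ico 0 T) p.1 := by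
  have h1 := ((hf.differentiableOn (by norm_num)) p hp).hasFDerivWithinAt
  have h2 : HasDerivWithinAt (fun s : ℝ => (s, p.2)) (1, 0) (Set.Ico 0 T) p.1 :=
    (hasDerivWithinAt_id _ _).prodMk (hasDerivWithinAt_const _ _ _)
  exact HasFDerivWithinAt.comp_hasDerivWithinAt (f := fun s : ℝ => (s, p.2)) p.1 h1 h2
    (fun s hs => ⟨hs, trivial⟩)

lemma wm_hasX {T : ℝ} {f : ℝ × ℝ → ℝ}
    (hf : ContDiffOn ℝ 1 f (Set.Ico 0 T ×ˢ (Set.univ : Set ℝ)))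
    {p : ℝ × ℝ} (hp : p ∈ Set.Ico 0 T ×ˢ (Set.univ : Set ℝ)) :
    HasDerivAt (fun y => f (p.1, y))
      (fderivWithin ℝ f (Set.Ico 0 T ×ˢ (Set.univ : Set ℝ)) p (0, 1)) p.2 := by
  have h1 := ((hf.differentiableOn (by norm_num)) p hp).hasFDerivWithinAt
  have h2 : HasDerivWithinAt (fun s : ℝ => (p.1, s)) (0, 1) Set.univ p.2 :=
    (hasDerivWithinAt_const _ _ _).prodMk (hasDerivWithinAt_id _ _)
  rw [← hasDerivWithinAt_univ]
  exact HasFDerivWithinAt.comp_hasDerivWithinAt (f := fun s : ℝ => (p.1, s)) p.2 h1 h2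
    (fun s _ => ⟨hp.1, trivial⟩)

lemma wm_pderivT {T : ℝ} {f : ℝ × ℝ → ℝ}
    (hf : ContDiffOn ℝ 1 f (Set.Ico 0 T ×ˢ (Set.univ : Set ℝ)))
    {p : ℝ × ℝ} (hp : p ∈ Set.Ico 0 T ×ˢ (Set.univ : Set ℝ)) :
    pderivT T f p = fderivWithin ℝ f (Set.Ico 0 T ×ˢ (Set.univ : Set ℝ)) p (1, 0) :=
  (wm_hasT hf hp).derivWithin (uniqueDiffOn_Ico 0 T _ hp.1)

lemma wm_pderivX {T : ℝ} {f : ℝ × ℝ → ℝ}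
    (hf : ContDiffOn ℝ 1 f (Set.Ico 0 T ×ˢ (Set.univ : Set ℝ)))
    {p : ℝ × ℝ} (hp : p ∈ Set.Ico 0 T ×ˢ (Set.univ : Set ℝ)) :
    pderivX f p = fderivWithin ℝ f (Set.Ico 0 T ×ˢ (Set.univ : Set ℝ)) p (0, 1) :=
  (wm_hasX hf hp).deriv

lemma wm_contT {T : ℝ} (hT : 0 < T) {f : ℝ × ℝ → ℝ}
    (hf : ContDiffOn ℝ 1 f (Set.Ico 0 T ×ˢ (Set.univ : Set ℝ))) :
    ContinuousOn (pderivT T f) (Set.Ico 0 T ×ˢ (Set.univ : Set ℝ)) := by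
  have h := hf.continuousOn_fderivWithin (wm_uniqueDiff hT) le_rfl
  exact (h.clm_apply continuousOn_const).congr (fun p hp => wm_pderivT hf hp)

lemma wm_contX {T : ℝ} (hT : 0 < T) {f : ℝ × ℝ → ℝ}
    (hf : ContDiffOn ℝ 1 f (Set.Ico 0 T ×ˢ (Set.univ : Set ℝ))) :
    ContinuousOn (pderivX f) (Set.Ico 0 T ×ˢ (Set.univ : Set ℝ)) := by
  have h := hf.continuousOn_fderivWithin (wm_uniqueDiff hT) le_rfl
  exact (h.clm_apply continuousOn_const).congr (fun p hp => wm_pderivX hf hp)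

lemma wm_slice {T : ℝ} {f : ℝ × ℝ → ℝ}
    (hf : ContinuousOn f (Set.Ico 0 T ×ˢ (Set.univ : Set ℝ))) {t : ℝ} (ht : t ∈ Set.Ico 0 T) :
    Continuous (fun x => f (t, x)) := by
  rw [← continuousOn_univ]
  exact hf.comp (by fun_prop) (fun x _ => ⟨ht, trivial⟩)

lemma wm_compactSupp {g : ℝ → ℝ} {R : ℝ} (h : ∀ x, R ≤ |x| → g x = 0) :
    HasCompactSupport g := by
  refine HasCompactSupport.intro (isCompact_Icc (a := -R) (b := R)) (fun x hx => h x ?_)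
  by_contra hlt
  push Not at hlt
  exact hx ⟨(abs_lt.1 hlt).1.le, (abs_lt.1 hlt).2.le⟩

lemma wm_integrable {g : ℝ → ℝ} {R : ℝ} (hg : Continuous g) (h : ∀ x, R ≤ |x| → g x = 0) :
    Integrable g := hg.integrable_of_hasCompactSupport (wm_compactSupp h)

lemma wm_diff {T M σ : ℝ} (hT : 0 < T) (hσ : 0 < σ) {f : ℝ × ℝ → ℝ}
    (hf : ContDiffOn ℝ 1 f (Set.Ico 0 T ×ˢ (Set.univ : Set ℝ)))
    (h0 : ∀ t ∈ Set.Ico (0 : ℝ) T, ∀ x : ℝ, M + σ * t ≤ |x| → f (t, x) = 0)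
    {t : ℝ} (ht : t ∈ Set.Ico 0 T) :
    HasDerivWithinAt (fun s : ℝ => ∫ x : ℝ, f (s, x)) (∫ x : ℝ, pderivT T f (t, x))
      (Set.Ico 0 T) t := by
  obtain ⟨T1, htT1, hT1⟩ := exists_between ht.2
  have ht0 := ht.1
  set R := M + σ * T1 with hR
  have hsub : Set.Icc 0 T1 ×ˢ Set.Icc (-R) R ⊆ Set.Ico 0 T ×ˢ (Set.univ : Set ℝ) :=
    Set.prod_mono (fun s hs => ⟨hs.1, hs.2.trans_lt hT1⟩) (Set.subset_univ _)
  obtain ⟨C, hC⟩ := (isCompact_Icc.prod isCompact_Icc).exists_bound_of_continuousOn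
    ((wm_contT hT hf).mono hsub)
  rw [hasDerivWithinAt_iff_tendsto_slope]
  have hev : ∀ᶠ s in nhdsWithin t (Set.Ico 0 T \ {t}), s ∈ Set.Icc 0 T1 ∧ s ≠ t := by
    have h1 : ∀ᶠ s in nhdsWithin t (Set.Ico 0 T \ {t}), s < T1 :=
      nhdsWithin_le_nhds (Iio_mem_nhds htT1)
    filter_upwards [h1, self_mem_nhdsWithin] with s hs hs'
    exact ⟨⟨hs'.1.1, hs.le⟩, hs'.2⟩
  have hint : ∀ s ∈ Set.Ico 0 T, Integrable (fun x => f (s, x)) := fun s hs =>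
    wm_integrable (wm_slice hf.continuousOn hs) (h0 s hs)
  have hz : ∀ s ∈ Set.Icc 0 T1, ∀ x, R ≤ |x| → f (s, x) = 0 := by
    intro s hs x hx
    refine h0 s ⟨hs.1, hs.2.trans_lt hT1⟩ x (le_trans ?_ hx)
    rw [hR]
    have := mul_le_mul_of_nonneg_left hs.2 hσ.le
    linarith
  have htm : t ∈ Set.Icc 0 T1 := ⟨ht0, htT1.le⟩
  have key : Filter.Tendsto (fun s => ∫ x, slope (fun r => f (r, x)) t s)
      (nhdsWithin t (Set.Ico 0 T \ {t})) (nhds (∫ x : ℝ, pderivT T f (t, x))) := by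
    refine tendsto_integral_filter_of_dominated_convergence
      ((Set.Icc (-R) R).indicator (fun _ => C)) ?_ ?_ ?_ ?_
    · filter_upwards [hev] with s hs
      have hs' : s ∈ Set.Ico 0 T := ⟨hs.1.1, hs.1.2.trans_lt hT1⟩
      simp only [slope_def_field]
      exact (((wm_slice hf.continuousOn hs').sub
        (wm_slice hf.continuousOn ht)).div_const _).aestronglyMeasurable
    · filter_upwards [hev] with s hs
      refine Filter.Eventually.of_forall (fun x => ?_)
      by_cases hx : x ∈ Set.Icc (-R) R
      · rw [Set.indicator_of_mem hx]
        have := (convex_Icc (0 : ℝ) T1).norm_image_sub_le_of_norm_hasDerivWithin_le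
          (f := fun r => f (r, x)) (f' := fun r => pderivT T f (r, x)) (C := C)
          (fun r hr => by
            have hrp : (r, x) ∈ Set.Ico 0 T ×ˢ (Set.univ : Set ℝ) :=
              ⟨⟨hr.1, hr.2.trans_lt hT1⟩, trivial⟩
            rw [wm_pderivT hf hrp]
            exact (wm_hasT hf hrp).mono (fun q hq => ⟨hq.1, hq.2.trans_lt hT1⟩))
          (fun r hr => hC (r, x) ⟨hr, hx⟩) htm hs.1
        rw [slope_def_field, norm_div, div_le_iff₀ (norm_pos_iff.2 (sub_ne_zero.2 hs.2))]
        exact this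
      · have hx' : R ≤ |x| := by
          by_contra hlt
          push Not at hlt
          exact hx ⟨(abs_lt.1 hlt).1.le, (abs_lt.1 hlt).2.le⟩
        rw [Set.indicator_of_notMem hx, slope_def_field, hz s hs.1 x hx', hz t htm x hx']
        simp
    · rw [integrable_indicator_iff measurableSet_Icc]
      exact continuousOn_const.integrableOn_compact isCompact_Icc
    · refine Filter.Eventually.of_forall (fun x => ?_)
      have hp : (t, x) ∈ Set.Ico 0 T ×ˢ (Set.univ : Set ℝ) := ⟨ht, trivial⟩
      have := wm_hasT hf hp
      rw [← wm_pderivT hf hp, hasDerivWithinAt_iff_tendsto_slope] at this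
      exact this
  refine key.congr' ?_
  filter_upwards [hev] with s hs
  have hs' : s ∈ Set.Ico 0 T := ⟨hs.1.1, hs.1.2.trans_lt hT1⟩
  simp only [slope_def_field]
  rw [integral_div, integral_sub (hint s hs') (hint t ht)]

/-- Lower bound (17) for the derivative of the weighted momentum
`F(t) = ∫ x ρ u dx` (reference state `ρ̄ = 1`):
`F′(t) ≥ ∫ ρu² − ½∫S² − (M + σ̃t)`. -/
theorem weighted_momentum_derivative_lower_bound
    (γ τ T M σt : ℝ) (hγ : 1 < γ) (hτ : 0 < τ) (hT : 0 < T) (hM : 0 < M) (hσt : 0 < σt)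
    (ρ u S : ℝ × ℝ → ℝ)
    (hρ : ContDiffOn ℝ 1 ρ (Set.Ico 0 T ×ˢ (Set.univ : Set ℝ)))
    (hu : ContDiffOn ℝ 1 u (Set.Ico 0 T ×ˢ (Set.univ : Set ℝ)))
    (hS : ContDiffOn ℝ 1 S (Set.Ico 0 T ×ˢ (Set.univ : Set ℝ)))
    (hpos : ∀ p ∈ Set.Ico 0 T ×ˢ (Set.univ : Set ℝ), 0 < ρ p)
    (hmass : ∀ p ∈ Set.Ico 0 T ×ˢ (Set.univ : Set ℝ),
      pderivT T ρ p + pderivX (fun q => ρ q * u q) p = 0)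
    (hmom : ∀ p ∈ Set.Ico 0 T ×ˢ (Set.univ : Set ℝ),
      ρ p * pderivT T u p + ρ p * u p * pderivX u p + pderivX (fun q => ρ q ^ γ) p
        = pderivX S p)
    (hrelax : ∀ p ∈ Set.Ico 0 T ×ˢ (Set.univ : Set ℝ),
      τ * ρ p * (pderivT T S p + u p * pderivX S p) - pderivX u p = - S p)
    (hsupp : ∀ t ∈ Set.Ico (0 : ℝ) T, ∀ x : ℝ, M + σt * t ≤ |x| →
      ρ (t, x) = 1 ∧ u (t, x) = 0 ∧ S (t, x) = 0)
    (hmassnonneg : ∀ t ∈ Set.Ico (0 : ℝ) T, 0 ≤ ∫ x : ℝ, (ρ (t, x) - 1)) :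
    ∀ t ∈ Set.Ico (0 : ℝ) T,
      ∃ F' : ℝ,
        HasDerivWithinAt (fun s : ℝ => ∫ x : ℝ, x * (ρ (s, x) * u (s, x))) F'
          (Set.Ico 0 T) t ∧
        (∫ x : ℝ, ρ (t, x) * u (t, x) ^ 2) - (1 / 2) * (∫ x : ℝ, S (t, x) ^ 2)
            - (M + σt * t) ≤ F' := by
  intro t ht
  have hR : 0 < M + σt * t := by have := mul_nonneg hσt.le ht.1; linarith
  have hf : ContDiffOn ℝ 1 (fun p : ℝ × ℝ => p.2 * (ρ p * u p))
      (Set.Ico 0 T ×ˢ (Set.univ : Set ℝ)) := contDiff_snd.contDiffOn.mul (hρ.mul hu)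
  have hpw : ContDiffOn ℝ 1 (fun p : ℝ × ℝ => ρ p ^ γ)
      (Set.Ico 0 T ×ˢ (Set.univ : Set ℝ)) :=
    hρ.rpow_const_of_ne (fun p hp => (hpos p hp).ne')
  have hF := wm_diff (M := M) hT hσt hf (fun s hs x hx => by simp [(hsupp s hs x hx).2.1]) ht
  refine ⟨_, hF, ?_⟩
  have hD : ∀ x : ℝ, (t, x) ∈ Set.Ico 0 T ×ˢ (Set.univ : Set ℝ) := fun x => ⟨ht, trivial⟩
  -- the flux
  have hGc : ContDiffOn ℝ 1 (fun p : ℝ × ℝ => ρ p * u p ^ 2 + (ρ p ^ γ - 1) - S p)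
      (Set.Ico 0 T ×ˢ (Set.univ : Set ℝ)) :=
    ((hρ.mul (hu.pow 2)).add (hpw.sub contDiffOn_const)).sub hS
  set G : ℝ × ℝ → ℝ := fun p => ρ p * u p ^ 2 + (ρ p ^ γ - 1) - S p with hG
  have hG0 : ∀ x, M + σt * t ≤ |x| → G (t, x) = 0 := by
    intro x hx
    obtain ⟨h1, h2, h3⟩ := hsupp t ht x hx
    simp [hG, h1, h2, h3]
  have hGd : ∀ x, HasDerivAt (fun y => G (t, y)) (pderivX G (t, x)) x := fun x => by
    rw [wm_pderivX hGc (hD x)]; exact wm_hasX hGc (hD x)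
  have hxd : ∀ {f : ℝ × ℝ → ℝ}, ContDiffOn ℝ 1 f (Set.Ico 0 T ×ˢ (Set.univ : Set ℝ)) →
      ∀ x, HasDerivAt (fun y => f (t, y)) (pderivX f (t, x)) x := fun {f} h x => by
    rw [wm_pderivX h (hD x)]; exact wm_hasX h (hD x)
  have htd : ∀ {f : ℝ × ℝ → ℝ}, ContDiffOn ℝ 1 f (Set.Ico 0 T ×ˢ (Set.univ : Set ℝ)) →
      ∀ x, HasDerivWithinAt (fun s => f (s, x)) (pderivT T f (t, x)) (Set.Ico 0 T) t :=
    fun {f} h x => by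
      rw [wm_pderivT h (hD x)]; exact wm_hasT h (hD x)
  have hpt : ∀ x, pderivT T (fun p : ℝ × ℝ => p.2 * (ρ p * u p)) (t, x)
      = - (x * pderivX G (t, x)) := by
    intro x
    have e1 : pderivT T (fun p : ℝ × ℝ => p.2 * (ρ p * u p)) (t, x)
        = x * (pderivT T ρ (t, x) * u (t, x) + ρ (t, x) * pderivT T u (t, x)) :=
      ((((htd hρ x).mul (htd hu x)).const_mul x)).derivWithin (uniqueDiffOn_Ico 0 T _ ht)
    have e2 : pderivX (fun q => ρ q * u q) (t, x)
        = pderivX ρ (t, x) * u (t, x) + ρ (t, x) * pderivX u (t, x) :=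
      ((hxd hρ x).mul (hxd hu x)).deriv
    have e3 : pderivX G (t, x) = (pderivX ρ (t, x) * u (t, x) ^ 2
        + ρ (t, x) * (2 * u (t, x) * pderivX u (t, x)))
        + pderivX (fun q => ρ q ^ γ) (t, x) - pderivX S (t, x) := by
      have h := (((hxd hρ x).mul ((hxd hu x).pow 2)).add
        ((hxd hpw x).sub_const 1)).sub (hxd hS x)
      have h' := (hGd x).unique h
      rw [h']
      norm_num
    have m1 := hmass _ (hD x)
    have m2 := hmom _ (hD x)
    rw [e2] at m1
    rw [e1, e3]
    linear_combination (x * u (t, x)) * m1 + x * m2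
  simp only [hpt]
  -- integration by parts
  have hGcont : Continuous (fun x => G (t, x)) := wm_slice hGc.continuousOn ht
  have hGint : Integrable (fun x => G (t, x)) := wm_integrable (R := M + σt * t) hGcont hG0
  have hGXcont : Continuous (fun x => pderivX G (t, x)) := wm_slice (wm_contX hT hGc) ht
  have hGXs : HasCompactSupport (fun x => pderivX G (t, x)) :=
    (wm_compactSupp hG0).deriv
  have hxGX : Integrable (fun x => x * pderivX G (t, x)) :=
    (continuous_id.mul hGXcont).integrable_of_hasCompactSupport hGXs.mul_left
  have hibp : ∫ x, (G (t, x) + x * pderivX G (t, x)) = 0 := by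
    refine integral_eq_zero_of_hasDerivAt_of_integrable (f := fun x => x * G (t, x)) ?_ ?_ ?_
    · intro x
      have := (hasDerivAt_id x).mul (hGd x)
      rw [one_mul] at this
      exact this
    · exact hGint.add hxGX
    · exact wm_integrable (R := M + σt * t) (continuous_id.mul hGcont) (fun x hx => by simp [hG0 x hx])
  rw [integral_add hGint hxGX] at hibp
  have hF' : ∫ x, -(x * pderivX G (t, x)) = ∫ x, G (t, x) := by
    rw [integral_neg]; linarith
  rw [hF']
  have cρ : Continuous (fun x => ρ (t, x)) := wm_slice hρ.continuousOn ht
  have cu : Continuous (fun x => u (t, x)) := wm_slice hu.continuousOn ht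
  have cS : Continuous (fun x => S (t, x)) := wm_slice hS.continuousOn ht
  have cp : Continuous (fun x => ρ (t, x) ^ γ) := wm_slice hpw.continuousOn ht
  have i1 : Integrable (fun x => ρ (t, x) * u (t, x) ^ 2) :=
    wm_integrable (R := M + σt * t) (cρ.mul (cu.pow 2)) (fun x hx => by simp [(hsupp t ht x hx).2.1])
  have i2 : Integrable (fun x => ρ (t, x) ^ γ - 1) :=
    wm_integrable (R := M + σt * t) (cp.sub continuous_const) (fun x hx => by simp [(hsupp t ht x hx).1])
  have i3 : Integrable (fun x => S (t, x)) :=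
    wm_integrable (R := M + σt * t) cS (fun x hx => (hsupp t ht x hx).2.2)
  have i4 : Integrable (fun x => S (t, x) ^ 2) :=
    wm_integrable (R := M + σt * t) (cS.pow 2) (fun x hx => by simp [(hsupp t ht x hx).2.2])
  have i5 : Integrable (fun x => ρ (t, x) - 1) :=
    wm_integrable (R := M + σt * t) (cρ.sub continuous_const) (fun x hx => by simp [(hsupp t ht x hx).1])
  have hsplit : ∫ x, G (t, x) = (∫ x, ρ (t, x) * u (t, x) ^ 2) + (∫ x, (ρ (t, x) ^ γ - 1))
      - ∫ x, S (t, x) := by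
    rw [← integral_add i1 i2]
    exact integral_sub (i1.add i2) i3
  have hP : 0 ≤ ∫ x, (ρ (t, x) ^ γ - 1) := by
    have h1 : ∫ x, γ * (ρ (t, x) - 1) ≤ ∫ x, (ρ (t, x) ^ γ - 1) := by
      refine integral_mono (i5.const_mul γ) i2 (fun x => ?_)
      have := one_add_mul_self_le_rpow_one_add (s := ρ (t, x) - 1)
        (by linarith [hpos _ (hD x)]) hγ.le
      rw [add_sub_cancel] at this
      show γ * (ρ (t, x) - 1) ≤ ρ (t, x) ^ γ - 1
      linarith
    rw [integral_const_mul] at h1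
    exact (mul_nonneg (by linarith) (hmassnonneg t ht)).trans h1
  have hSb : ∫ x, S (t, x) ≤ (1 / 2) * (∫ x, S (t, x) ^ 2) + (M + σt * t) := by
    have i6 : Integrable ((Set.Icc (-(M + σt * t)) (M + σt * t)).indicator
        (fun _ => (1 / 2 : ℝ))) := by
      rw [integrable_indicator_iff measurableSet_Icc]
      exact continuousOn_const.integrableOn_compact isCompact_Icc
    have h1 : ∫ x, S (t, x) ≤ ∫ x, ((1 / 2) * S (t, x) ^ 2
        + (Set.Icc (-(M + σt * t)) (M + σt * t)).indicator (fun _ => (1 / 2 : ℝ)) x) := by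
      refine integral_mono i3 ((i4.const_mul _).add i6) (fun x => ?_)
      show S (t, x) ≤ (1 / 2) * S (t, x) ^ 2
        + (Set.Icc (-(M + σt * t)) (M + σt * t)).indicator (fun _ => (1 / 2 : ℝ)) x
      by_cases hx : x ∈ Set.Icc (-(M + σt * t)) (M + σt * t)
      · rw [Set.indicator_of_mem hx]
        nlinarith [sq_nonneg (S (t, x) - 1)]
      · have hx' : M + σt * t ≤ |x| := by
          by_contra hlt
          push Not at hlt
          exact hx ⟨(abs_lt.1 hlt).1.le, (abs_lt.1 hlt).2.le⟩
        rw [Set.indicator_of_notMem hx, (hsupp t ht x hx').2.2]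
        simp
    rw [integral_add (i4.const_mul _) i6, integral_const_mul,
      integral_indicator measurableSet_Icc, setIntegral_const, Real.volume_real_Icc_of_le
      (by linarith), smul_eq_mul] at h1
    linarith
  rw [hsplit]
  linarith
end

section
/- Let T ∈ (0, ∞], c₁, c₂, c₃, H > 0, let F : [0,T) → ℝ be differentiable with F(t) ≥ c₁ for all t ∈ [0,T), and let G : [0,T) → [0,∞) be integrable on compact subintervals with ∫₀^t G(s) ds ≤ H for all t ∈ [0,T). Assume that for all t ∈ [0,T): F′(t) ≥ (c₃ F(t)²)/(2(1+c₂t)³) − G(t)/2. Then for all t ∈ [0,T): 1/F(0) ≥ 1/F(0) − 1/F(t) ≥ −c₃/(4c₂(1+c₂t)²) + c₃/(4c₂) − H/(2c₁²). -/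
open MeasureTheory

/-- Abstract Riccati-type comparison lemma on `[0,T)` (with `T ∈ (0,∞]`, modelled by
`T : EReal`): if `F ≥ c₁ > 0`, `F′(t) ≥ c₃F(t)²/(2(1+c₂t)³) − G(t)/2` with
`G ≥ 0` and `∫₀ᵗ G ≤ H`, then
`1/F(0) ≥ 1/F(0) − 1/F(t) ≥ −c₃/(4c₂(1+c₂t)²) + c₃/(4c₂) − H/(2c₁²)`. -/
theorem riccati_comparison
    (T : EReal) (hT : 0 < T)
    (c₁ c₂ c₃ H : ℝ) (hc₁ : 0 < c₁) (hc₂ : 0 < c₂) (hc₃ : 0 < c₃) (hH : 0 < H)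
    (F F' G : ℝ → ℝ)
    (hF' : ∀ t : ℝ, 0 ≤ t → (t : EReal) < T →
      HasDerivWithinAt F (F' t) {s : ℝ | 0 ≤ s ∧ (s : EReal) < T} t)
    (hFc₁ : ∀ t : ℝ, 0 ≤ t → (t : EReal) < T → c₁ ≤ F t)
    (hGnonneg : ∀ t : ℝ, 0 ≤ t → (t : EReal) < T → 0 ≤ G t)
    (hGint : ∀ t : ℝ, 0 ≤ t → (t : EReal) < T → IntegrableOn G (Set.Icc 0 t))
    (hGH : ∀ t : ℝ, 0 ≤ t → (t : EReal) < T → (∫ s in (0 : ℝ)..t, G s) ≤ H)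
    (hRic : ∀ t : ℝ, 0 ≤ t → (t : EReal) < T →
      c₃ * F t ^ 2 / (2 * (1 + c₂ * t) ^ 3) - G t / 2 ≤ F' t) :
    ∀ t : ℝ, 0 ≤ t → (t : EReal) < T →
      (-(c₃ / (4 * c₂ * (1 + c₂ * t) ^ 2)) + c₃ / (4 * c₂) - H / (2 * c₁ ^ 2)
          ≤ 1 / F 0 - 1 / F t) ∧
      (1 / F 0 - 1 / F t ≤ 1 / F 0) := by
  intro t ht0 htT
  have hlt : ∀ s : ℝ, s ≤ t → (s : EReal) < T := fun s hs =>
    lt_of_le_of_lt (EReal.coe_le_coe_iff.mpr hs) htT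
  have hpos : ∀ s : ℝ, 0 ≤ s → s ≤ t → 0 < F s := fun s h0 h1 =>
    lt_of_lt_of_le hc₁ (hFc₁ s h0 (hlt s h1))
  have hFt := hpos t ht0 le_rfl
  refine ⟨?_, by have : 0 < 1 / F t := by positivity
                 linarith⟩
  have hder : ∀ s ∈ Set.Icc 0 t, HasDerivWithinAt
      (fun s => (F s)⁻¹ - c₃ / (4 * c₂) * ((1 + c₂ * s) ^ 2)⁻¹)
      (-F' s / F s ^ 2 + c₃ / (2 * (1 + c₂ * s) ^ 3)) (Set.Icc 0 t) s := by
    intro s hs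
    have hp : 0 < 1 + c₂ * s := by have := mul_nonneg hc₂.le hs.1; linarith
    have h1 := ((hF' s hs.1 (hlt s hs.2)).mono
      (fun x (hx : x ∈ Set.Icc 0 t) => ⟨hx.1, hlt x hx.2⟩)).fun_inv (hpos s hs.1 hs.2).ne'
    have h2 : HasDerivAt (fun s : ℝ => 1 + c₂ * s) c₂ s := by
      simpa using ((hasDerivAt_id s).const_mul c₂).const_add 1
    have h3 := (((h2.fun_pow 2).fun_inv (by positivity)).const_mul
      (c₃ / (4 * c₂))).hasDerivWithinAt (s := Set.Icc 0 t)
    refine (h1.fun_sub h3).congr_deriv ?_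
    have := (hpos s hs.1 hs.2).ne'
    field_simp
    norm_num
    try ring
  have key := intervalIntegral.sub_le_integral_of_hasDeriv_right_of_le ht0
    (fun s hs => (hder s hs).continuousWithinAt)
    (fun s hs => ((hder s ⟨hs.1.le, hs.2.le⟩).hasDerivAt
      (Icc_mem_nhds hs.1 hs.2)).hasDerivWithinAt)
    ((hGint t ht0 htT).const_mul (1 / (2 * c₁ ^ 2))) (by
      intro s hs
      have hR := hRic s hs.1.le (hlt s hs.2.le)
      have hG := hGnonneg s hs.1.le (hlt s hs.2.le)
      have hF := hFc₁ s hs.1.le (hlt s hs.2.le)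
      have hF0 := hpos s hs.1.le hs.2.le
      have hp : 0 < 1 + c₂ * s := by have := mul_pos hc₂ hs.1; linarith
      have e1 : (c₃ * F s ^ 2 / (2 * (1 + c₂ * s) ^ 3) - G s / 2) / F s ^ 2
          ≤ F' s / F s ^ 2 := by gcongr
      have e2 : (c₃ * F s ^ 2 / (2 * (1 + c₂ * s) ^ 3) - G s / 2) / F s ^ 2
          = c₃ / (2 * (1 + c₂ * s) ^ 3) - 1 / (2 * F s ^ 2) * G s := by
        field_simp
      have e3 : 1 / (2 * F s ^ 2) * G s ≤ 1 / (2 * c₁ ^ 2) * G s := by gcongr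
      rw [neg_div]
      linarith)
  rw [intervalIntegral.integral_const_mul] at key
  have hk : 1 / (2 * c₁ ^ 2) * (∫ s in (0 : ℝ)..t, G s) ≤ 1 / (2 * c₁ ^ 2) * H := by
    have := hGH t ht0 htT
    gcongr
  have hp : 0 < 1 + c₂ * t := by have := mul_nonneg hc₂.le ht0; linarith
  have e4 : c₃ / (4 * c₂ * (1 + c₂ * t) ^ 2) = c₃ / (4 * c₂) * ((1 + c₂ * t) ^ 2)⁻¹ := by
    field_simp
  have e5 : H / (2 * c₁ ^ 2) = 1 / (2 * c₁ ^ 2) * H := by ring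
  rw [e4, e5, one_div (F 0), one_div (F t)]
  norm_num at key hk ⊢
  linarith
end
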